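/- arXiv:math/0305371 — 2 statements merged into one kernel-verified Lean document; each statement's English description precedes it below -/
import Mathlib

section
/- A product system (E,φ) of graphs over ℕ^k is finitely aligned if and only if MCE(μ,ν) is finite for every pair of edges μ ∈ E¹_{e_i} and ν ∈ E¹_{e_j} with i ≠ j. -/
open scoped Classical

noncomputable section

namespace PSG

variable {G : Type*} [Group G] {Λ : Type*}

/-- `g ≤ h` in the left-invariant partial order induced by the submonoid `P`. -/
def qle (P : Submonoid G) (g h : G) : Prop := g⁻¹ * h ∈ P

/-- `r` is a common upper bound of `p` and `q` in `P`. -/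
def IsUB (P : Submonoid G) (p q r : G) : Prop := r ∈ P ∧ qle P p r ∧ qle P q r

/-- `r` is the least common upper bound of `p` and `q` in `P`. -/
def IsLUB2 (P : Submonoid G) (p q r : G) : Prop :=
  IsUB P p q r ∧ ∀ r', IsUB P p q r' → qle P r r'

/-- `r` is the least upper bound in `P` of the set of degrees `D`. -/
def IsLUBFam (P : Submonoid G) (D : Set G) (r : G) : Prop :=
  r ∈ P ∧ (∀ p ∈ D, qle P p r) ∧ ∀ r' ∈ P, (∀ p ∈ D, qle P p r') → qle P r r'

/-- `(G, P)` is quasi-lattice ordered: `P ∩ P⁻¹ = {1}` and every pair of elements of `P`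
with a common upper bound in `P` has a least upper bound in `P`. -/
def QuasiLatticeOrdered (P : Submonoid G) : Prop :=
  (∀ g ∈ P, g⁻¹ ∈ P → g = 1) ∧
    ∀ p ∈ P, ∀ q ∈ P, (∃ r, IsUB P p q r) → ∃ r, IsLUB2 P p q r

/-- A product system of graphs over `P`, encoded on a single edge set `Λ` (which contains the
vertices as the elements of degree `1`), with degree map `d`, source and range maps `src`, `rng`
(valued in vertices), and partial multiplication `mul` (meaningful when `rng a = src b`). -/
structure IsProductSystem (P : Submonoid G) (d : Λ → G) (src rng : Λ → Λ)
    (mul : Λ → Λ → Λ) : Prop where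
  countable : Countable Λ
  d_mem : ∀ a, d a ∈ P
  d_src : ∀ a, d (src a) = 1
  d_rng : ∀ a, d (rng a) = 1
  src_vertex : ∀ v, d v = 1 → src v = v
  rng_vertex : ∀ v, d v = 1 → rng v = v
  d_mul : ∀ a b, rng a = src b → d (mul a b) = d a * d b
  src_mul : ∀ a b, rng a = src b → src (mul a b) = src a
  rng_mul : ∀ a b, rng a = src b → rng (mul a b) = rng b
  mul_assoc' : ∀ a b c, rng a = src b → rng b = src c →
    mul (mul a b) c = mul a (mul b c)
  src_mul_self : ∀ a, mul (src a) a = a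
  mul_rng_self : ∀ a, mul a (rng a) = a
  factor : ∀ p q : G, p ∈ P → q ∈ P → ∀ c, d c = p * q →
    ∃! ab : Λ × Λ, d ab.1 = p ∧ d ab.2 = q ∧ rng ab.1 = src ab.2 ∧ mul ab.1 ab.2 = c

/-- `a` is an initial segment of `c`: `c = a • b` for some (necessarily unique) `b`. -/
def IsInit (src rng : Λ → Λ) (mul : Λ → Λ → Λ) (a c : Λ) : Prop :=
  ∃ b, rng a = src b ∧ mul a b = c

/-- The set of minimal common extensions of `μ` and `ν`. -/
def MCE (P : Submonoid G) (d : Λ → G) (src rng : Λ → Λ) (mul : Λ → Λ → Λ)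
    (μ ν : Λ) : Set Λ :=
  {γ | IsInit src rng mul μ γ ∧ IsInit src rng mul ν γ ∧ IsLUB2 P (d μ) (d ν) (d γ)}

/-- The product system is finitely aligned. -/
def FinitelyAligned (P : Submonoid G) (d : Λ → G) (src rng : Λ → Λ)
    (mul : Λ → Λ → Λ) : Prop :=
  ∀ μ ν : Λ, (MCE P d src rng mul μ ν).Finite

/-- The set of minimal common extensions of a set `S` of edges. -/
def MCEset (P : Submonoid G) (d : Λ → G) (src rng : Λ → Λ) (mul : Λ → Λ → Λ)
    (S : Set Λ) : Set Λ :=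
  {γ | (∀ α ∈ S, IsInit src rng mul α γ) ∧ IsLUBFam P (d '' S) (d γ)}

/-- `∨F`: the union of `MCE(S)` over the nonempty subsets `S ⊆ F`. -/
def vee (P : Submonoid G) (d : Λ → G) (src rng : Λ → Λ) (mul : Λ → Λ → Λ)
    (F : Finset Λ) : Set Λ :=
  {γ | ∃ S : Finset Λ, S.Nonempty ∧ S ⊆ F ∧ γ ∈ MCEset P d src rng mul ↑S}

/-- Given that `a` is an initial segment of `c`, the (unique) complementary segment;
junk value `c` otherwise. -/
def tail (src rng : Λ → Λ) (mul : Λ → Λ → Λ) (a c : Λ) : Λ :=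
  if h : IsInit src rng mul a c then h.choose else c

section CstarFamilies

variable (P : Submonoid G) (d : Λ → G) (src rng : Λ → Λ) (mul : Λ → Λ → Λ)
variable {B : Type*} [CStarAlgebra B] [PartialOrder B] [StarOrderedRing B]

/-- A Toeplitz `E`-family in a C*-algebra `B` (conditions (1)–(4)). -/
structure IsToeplitzFamily (t : Λ → B) : Prop where
  vertex_sa : ∀ v, d v = 1 → IsSelfAdjoint (t v)
  vertex_idem : ∀ v, d v = 1 → t v * t v = t v
  vertex_orth : ∀ v w, d v = 1 → d w = 1 → v ≠ w → t v * t w = 0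
  mul_eq : ∀ a b, rng a = src b → t a * t b = t (mul a b)
  star_mul_self : ∀ a, star (t a) * t a = t (rng a)
  dom : ∀ p : G, p ∈ P → p ≠ 1 → ∀ v, d v = 1 → ∀ F : Finset Λ,
    (∀ a ∈ F, d a = p ∧ src a = v) → (∑ a ∈ F, t a * star (t a)) ≤ t v

/-- The Nica-covariance/Cuntz–Krieger relation (5):
`tμ* tν = ∑_{γ = μα = νβ ∈ MCE(μ,ν)} tα tβ*`. -/
def TCKrel (t : Λ → B) : Prop :=
  ∀ μ ν : Λ, ∀ M : Finset Λ, ↑M = MCE P d src rng mul μ ν →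
    star (t μ) * t ν =
      ∑ γ ∈ M, t (tail src rng mul μ γ) * star (t (tail src rng mul ν γ))

/-- A Toeplitz–Cuntz–Krieger `E`-family: conditions (1)–(5). -/
def IsTCKFamily (t : Λ → B) : Prop :=
  IsToeplitzFamily P d src rng mul t ∧ TCKrel P d src rng mul t

/-- Condition (†): for every finite `R ⊆ P∖{1}`, every vertex `v`, and all finite sets
`F_p ⊆ s_p⁻¹(v)` (`p ∈ R`), the product `∏_{p ∈ R} (t_v − ∑_{a ∈ F_p} t_a t_a*)` is nonzero.
(The factors commute, so the product is stated for an arbitrary enumeration of `R`.) -/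
def Dagger (t : Λ → B) : Prop :=
  ∀ R : List G, R.Nodup → (∀ p ∈ R, p ∈ P ∧ p ≠ 1) →
    ∀ v, d v = 1 → ∀ Fp : G → Finset Λ,
      (∀ p ∈ R, ∀ a ∈ Fp p, d a = p ∧ src a = v) →
        (R.map fun p => t v - ∑ a ∈ Fp p, t a * star (t a)).prod ≠ 0

/-- The projection `Q^{∨F}_l = t_l t_l* ∏_{l α ∈ ∨F, d α ≠ 1} (t_{s(l)} − t_{lα} t_{lα}*)`.
(The factors commute, so the product is computed over an arbitrary enumeration.) -/
def Qproj (t : Λ → B) (F : Finset Λ) (l : Λ) : B :=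
  if h : {α : Λ | d α ≠ 1 ∧ rng l = src α ∧ mul l α ∈ vee P d src rng mul F}.Finite then
    t l * star (t l) *
      (h.toFinset.toList.map fun α =>
        t (src l) - t (mul l α) * star (t (mul l α))).prod
  else 0

end CstarFamilies

/-- The positive cone `ℕ^k` inside `ℤ^k` (written multiplicatively). -/
def posCone (k : ℕ) : Submonoid (Multiplicative (Fin k → ℤ)) where
  carrier := {g | ∀ i, 0 ≤ Multiplicative.toAdd g i}
  mul_mem' := by
    intro a b ha hb i
    simpa using add_nonneg (ha i) (hb i)
  one_mem' := by
    intro i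
    simp

/-- The `i`-th standard generator of `ℕ^k ⊆ ℤ^k`. -/
def egen (k : ℕ) (i : Fin k) : Multiplicative (Fin k → ℤ) :=
  Multiplicative.ofAdd (Pi.single i 1)

end PSG
namespace PSG

/-!
A common extension of `μ` and `ν` always extends a minimal one. Hence if `γ ∈ MCE(μf, ν)`, then `γ`
extends some `μα ∈ MCE(μ, ν)`, and cancelling `μ` puts the remainder of `γ` into `MCE(f, α)`. So
`MCE(μf, ν)` is covered by the sets `μ MCE(f, α)`, where `μα` ranges over `MCE(μ, ν)`.

Here `d(α)` is the complement `d(μ)⁻¹(d(μ) ∨ d(ν))`. Suppose that the complements of generators in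
one another are again generators or trivial, as in `ℕ^k`, where `e_i ∨ e_j = e_i + e_j`. Splitting
generators off the left of `μ` then gives finiteness of `MCE(μ, ν)` first for `d(ν)` a generator
and, after exchanging `μ` and `ν`, for arbitrary `ν`.
-/

section Order

variable {G : Type*} [Group G] {P : Submonoid G} {p q r s t a : G}

theorem qle_refl (p : G) : qle P p p := by
  simp only [qle, inv_mul_cancel, one_mem]

theorem qle.trans (hpq : qle P p q) (hqr : qle P q r) : qle P p r := by
  simpa only [qle, mul_assoc, mul_inv_cancel_left] using mul_mem hpq hqr

theorem one_qle_iff : qle P 1 p ↔ p ∈ P := by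
  rw [qle, inv_one, one_mul]

theorem qle_mul_right (p : G) (hs : s ∈ P) : qle P p (p * s) := by
  rwa [qle, inv_mul_cancel_left]

theorem qle_mul_left_iff : qle P (p * q) (p * r) ↔ qle P q r := by
  simp only [qle, mul_inv_rev, mul_assoc, inv_mul_cancel_left]

theorem IsLUB2.symm (h : IsLUB2 P p q r) : IsLUB2 P q p r :=
  ⟨⟨h.1.1, h.1.2.2, h.1.2.1⟩, fun r' hr' => h.2 r' ⟨hr'.1, hr'.2.2, hr'.2.1⟩⟩

theorem QuasiLatticeOrdered.qle_antisymm (hP : QuasiLatticeOrdered P) (hpq : qle P p q)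
    (hqp : qle P q p) : p = q :=
  inv_mul_eq_one.1 (hP.1 _ hpq (by rwa [mul_inv_rev, inv_inv]))

theorem IsLUB2.unique (hP : QuasiLatticeOrdered P) (hr : IsLUB2 P p q r) (hs : IsLUB2 P p q s) :
    r = s :=
  hP.qle_antisymm (hr.2 s hs.1) (hs.2 r hr.1)

theorem IsLUB2.eq_of_qle (hP : QuasiLatticeOrdered P) (h : IsLUB2 P p q r) (hq : q ∈ P)
    (hpq : qle P p q) : r = q :=
  h.unique hP ⟨⟨hq, hpq, qle_refl q⟩, fun _ hr => hr.2.2⟩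

-- In terms of joins: `ps ∨ q = p(s ∨ p⁻¹(p ∨ q))`.
theorem IsLUB2.cancel_left (hp : p ∈ P) (hs : s ∈ P) (ha : IsLUB2 P p q (p * a))
    (ht : IsLUB2 P (p * s) q (p * t)) : IsLUB2 P s a t := by
  have hst : qle P s t := qle_mul_left_iff.1 ht.1.2.1
  have htP : t ∈ P := one_qle_iff.1 ((one_qle_iff.2 hs).trans hst)
  have hat : qle P a t := qle_mul_left_iff.1 (ha.2 _ ⟨ht.1.1, qle_mul_right p htP, ht.1.2.2⟩)
  refine ⟨⟨htP, hst, hat⟩, fun r ⟨hr, hsr, har⟩ => ?_⟩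
  have hqr : qle P q (p * r) := ha.1.2.2.trans (qle_mul_left_iff.2 har)
  exact qle_mul_left_iff.1 (ht.2 _ ⟨mul_mem hp hr, qle_mul_left_iff.2 hsr, hqr⟩)

end Order

section ProductSystem

variable {G : Type*} [Group G] {P : Submonoid G} {Λ : Type*} {d : Λ → G} {src rng : Λ → Λ}
  {mul : Λ → Λ → Λ}

namespace IsProductSystem

theorem exists_factor (h : IsProductSystem P d src rng mul) {c : Λ} {p : G} (hp : p ∈ P)
    (hpc : qle P p (d c)) : ∃ a b, d a = p ∧ rng a = src b ∧ mul a b = c := by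
  obtain ⟨⟨a, b⟩, ⟨ha, -, hab, hc⟩, -⟩ := h.factor p (p⁻¹ * d c) hp hpc c
    (mul_inv_cancel_left p (d c)).symm
  exact ⟨a, b, ha, hab, hc⟩

theorem factor_unique (h : IsProductSystem P d src rng mul) {a b a' b' : Λ}
    (hab : rng a = src b) (hab' : rng a' = src b') (hd : d a = d a')
    (he : mul a b = mul a' b') : a = a' ∧ b = b' := by
  have hdb : d b' = d b := by
    have hmul := congrArg d he
    rw [h.d_mul _ _ hab, h.d_mul _ _ hab', hd] at hmul
    exact (mul_left_cancel hmul).symm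
  exact Prod.ext_iff.1 <|
    (h.factor (d a) (d b) (h.d_mem a) (h.d_mem b) (mul a b) (h.d_mul _ _ hab)).unique
      (y₁ := (a, b)) (y₂ := (a', b')) ⟨rfl, rfl, hab, rfl⟩ ⟨hd.symm, hdb, hab', he.symm⟩

theorem qle_of_isInit (h : IsProductSystem P d src rng mul) {a c : Λ}
    (hac : IsInit src rng mul a c) : qle P (d a) (d c) := by
  obtain ⟨b, hb, rfl⟩ := hac
  rw [h.d_mul _ _ hb]
  exact qle_mul_right _ (h.d_mem b)

theorem isInit_of_qle (h : IsProductSystem P d src rng mul) {a b c : Λ}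
    (hac : IsInit src rng mul a c) (hbc : IsInit src rng mul b c) (hab : qle P (d a) (d b)) :
    IsInit src rng mul a b := by
  obtain ⟨x, hax, rfl⟩ := hac
  obtain ⟨y, hby, hxy⟩ := hbc
  obtain ⟨a', z, ha', haz, rfl⟩ := h.exists_factor (h.d_mem a) hab
  rw [h.rng_mul _ _ haz] at hby
  rw [h.mul_assoc' _ _ _ haz hby] at hxy
  obtain ⟨rfl, -⟩ := h.factor_unique (by rw [haz, h.src_mul _ _ hby]) hax ha' hxy
  exact ⟨z, haz, rfl⟩

theorem isInit_of_isInit_mul_left (h : IsProductSystem P d src rng mul) {μ a c : Λ}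
    (ha : rng μ = src a) (hc : rng μ = src c) (hac : IsInit src rng mul (mul μ a) (mul μ c)) :
    IsInit src rng mul a c := by
  obtain ⟨b, hb, he⟩ := hac
  rw [h.rng_mul _ _ ha] at hb
  rw [h.mul_assoc' _ _ _ ha hb] at he
  exact ⟨b, hb, (h.factor_unique (by rw [ha, h.src_mul _ _ hb]) hc rfl he).2⟩

theorem induction_left (h : IsProductSystem P d src rng mul) {ι : Type*} {e : ι → G}
    (he : Submonoid.closure (Set.range e) = P) {C : Λ → Prop} (vertex : ∀ v, d v = 1 → C v)
    (mul_left : ∀ i f μ, d f = e i → rng f = src μ → C μ → C (mul f μ)) (μ : Λ) : C μ := by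
  suffices hdeg : ∀ p ∈ Submonoid.closure (Set.range e), ∀ μ, d μ = p → C μ from
    hdeg (d μ) (he ▸ h.d_mem μ) μ rfl
  intro p hp
  induction hp using Submonoid.closure_induction_left with
  | one => exact vertex
  | mul_left g hg q hq ih =>
    obtain ⟨i, rfl⟩ := hg
    intro μ hd
    have hei : e i ∈ P := he ▸ Submonoid.subset_closure ⟨i, rfl⟩
    obtain ⟨f, μ', hf, hfμ', rfl⟩ := h.exists_factor hei (hd ▸ qle_mul_right _ (he ▸ hq))
    have hμ' : d μ' = q := by rwa [h.d_mul _ _ hfμ', hf, mul_right_inj] at hd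
    exact mul_left i f μ' hf hfμ' (ih μ' hμ')

end IsProductSystem

theorem mce_comm (μ ν : Λ) : MCE P d src rng mul μ ν = MCE P d src rng mul ν μ :=
  Set.ext fun _ => ⟨fun ⟨hμ, hν, hγ⟩ => ⟨hν, hμ, hγ.symm⟩, fun ⟨hν, hμ, hγ⟩ => ⟨hμ, hν, hγ.symm⟩⟩

namespace IsProductSystem

theorem mce_subset_singleton_of_qle (h : IsProductSystem P d src rng mul)
    (hP : QuasiLatticeOrdered P) {μ ν : Λ} (hμν : qle P (d μ) (d ν)) :
    MCE P d src rng mul μ ν ⊆ {ν} := by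
  rintro _ ⟨-, ⟨v, hv, rfl⟩, hd⟩
  have hdv : d v = 1 := by
    simpa only [h.d_mul _ _ hv, mul_eq_left] using hd.eq_of_qle hP (h.d_mem ν) hμν
  rw [Set.mem_singleton_iff, ← h.src_vertex v hdv, ← hv, h.mul_rng_self]

theorem finite_mce_of_qle (h : IsProductSystem P d src rng mul) (hP : QuasiLatticeOrdered P)
    {μ ν : Λ} (hμν : qle P (d μ) (d ν)) : (MCE P d src rng mul μ ν).Finite :=
  (Set.finite_singleton ν).subset (h.mce_subset_singleton_of_qle hP hμν)

theorem finite_mce_of_eq_one (h : IsProductSystem P d src rng mul) (hP : QuasiLatticeOrdered P)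
    {v : Λ} (hv : d v = 1) (ν : Λ) : (MCE P d src rng mul v ν).Finite :=
  h.finite_mce_of_qle hP (hv ▸ one_qle_iff.2 (h.d_mem ν))

theorem exists_isInit_mem_mce (h : IsProductSystem P d src rng mul) (hP : QuasiLatticeOrdered P)
    {μ ν γ : Λ} (hμ : IsInit src rng mul μ γ) (hν : IsInit src rng mul ν γ) :
    ∃ σ ∈ MCE P d src rng mul μ ν, IsInit src rng mul σ γ := by
  have hUB : IsUB P (d μ) (d ν) (d γ) := ⟨h.d_mem γ, h.qle_of_isInit hμ, h.qle_of_isInit hν⟩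
  obtain ⟨r, hr⟩ := hP.2 _ (h.d_mem μ) _ (h.d_mem ν) ⟨d γ, hUB⟩
  obtain ⟨σ, β, rfl, hσβ, rfl⟩ := h.exists_factor hr.1.1 (hr.2 _ hUB)
  have hσ : IsInit src rng mul σ (mul σ β) := ⟨β, hσβ, rfl⟩
  exact ⟨σ, ⟨h.isInit_of_qle hμ hσ hr.1.2.1, h.isInit_of_qle hν hσ hr.1.2.2, hr⟩, hσ⟩

theorem mce_mul_subset (h : IsProductSystem P d src rng mul) (hP : QuasiLatticeOrdered P)
    {μ f : Λ} (hμf : rng μ = src f) (ν : Λ) :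
    MCE P d src rng mul (mul μ f) ν ⊆
      ⋃ α ∈ {α | rng μ = src α ∧ mul μ α ∈ MCE P d src rng mul μ ν},
        mul μ '' MCE P d src rng mul f α := by
  rintro _ ⟨⟨δ, hδ, rfl⟩, hν, hlub⟩
  rw [h.rng_mul _ _ hμf] at hδ
  have hμfδ : rng μ = src (mul f δ) := by rw [hμf, h.src_mul _ _ hδ]
  rw [h.mul_assoc' _ _ _ hμf hδ] at hν hlub ⊢
  obtain ⟨_, hσ, hσγ⟩ := h.exists_isInit_mem_mce hP ⟨mul f δ, hμfδ, rfl⟩ hν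
  obtain ⟨α, hα, rfl⟩ := hσ.1
  have hlubα := hσ.2.2
  rw [h.d_mul _ _ hα] at hlubα
  rw [h.d_mul _ _ hμf, h.d_mul _ _ hμfδ] at hlub
  have hfδ : mul f δ ∈ MCE P d src rng mul f α :=
    ⟨⟨δ, hδ, rfl⟩, h.isInit_of_isInit_mul_left hα hμfδ hσγ,
      hlubα.cancel_left (h.d_mem μ) (h.d_mem f) hlub⟩
  exact Set.mem_biUnion ⟨hα, hσ⟩ (Set.mem_image_of_mem _ hfδ)

theorem finite_mce_mul (h : IsProductSystem P d src rng mul) (hP : QuasiLatticeOrdered P)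
    {μ f ν : Λ} (hμf : rng μ = src f) (hμν : (MCE P d src rng mul μ ν).Finite)
    (hf : ∀ α, IsLUB2 P (d μ) (d ν) (d μ * d α) → (MCE P d src rng mul f α).Finite) :
    (MCE P d src rng mul (mul μ f) ν).Finite := by
  have htails : {α | rng μ = src α ∧ mul μ α ∈ MCE P d src rng mul μ ν}.Finite :=
    Set.Finite.of_injOn (f := mul μ) (fun _ hα => hα.2)
      (fun _ hα _ hβ he => (h.factor_unique hα.1 hβ.1 rfl he).2) hμν
  refine (htails.biUnion fun α hα => (hf α ?_).image _).subset (h.mce_mul_subset hP hμf ν)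
  simpa only [h.d_mul _ _ hα.1] using hα.2.2.2

theorem finite_mce_of_generators (h : IsProductSystem P d src rng mul)
    (hP : QuasiLatticeOrdered P) {ι : Type*} {e : ι → G}
    (he : Submonoid.closure (Set.range e) = P) {T : Set G}
    (hT : ∀ i, ∀ t ∈ T, ∀ a, IsLUB2 P (e i) t (e i * a) → a ∈ T)
    (hfin : ∀ i f ν, d f = e i → d ν ∈ T → (MCE P d src rng mul f ν).Finite) (μ ν : Λ)
    (hν : d ν ∈ T) : (MCE P d src rng mul μ ν).Finite := by
  induction μ using h.induction_left he generalizing ν with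
  | vertex v hv => exact h.finite_mce_of_eq_one hP hv ν
  | mul_left i f μ hf hfμ ih =>
    exact h.finite_mce_mul hP hfμ (hfin i f ν hf hν) fun α hα => ih α (hT i _ hν _ (hf ▸ hα))

end IsProductSystem

theorem stmt1_general {ι : Type*} {e : ι → G} (hP : QuasiLatticeOrdered P)
    (he : Submonoid.closure (Set.range e) = P)
    (hcompl : ∀ i j a, i ≠ j → IsLUB2 P (e i) (e j) (e i * a) → a = 1 ∨ a ∈ Set.range e)
    (hPS : IsProductSystem P d src rng mul) :
    FinitelyAligned P d src rng mul ↔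
      ∀ i j : ι, i ≠ j → ∀ μ ν : Λ, d μ = e i → d ν = e j →
        (MCE P d src rng mul μ ν).Finite := by
  refine ⟨fun h _ _ _ μ ν _ _ => h μ ν, fun hfin => ?_⟩
  have heP : ∀ i, e i ∈ P := fun i => he ▸ Submonoid.subset_closure ⟨i, rfl⟩
  have hT : ∀ i, ∀ t ∈ insert 1 (Set.range e), ∀ a, IsLUB2 P (e i) t (e i * a) →
      a ∈ insert 1 (Set.range e) := by
    rintro i _ (rfl | ⟨j, rfl⟩) a ha
    · exact .inl (mul_eq_left.1 (ha.symm.eq_of_qle hP (heP i) (one_qle_iff.2 (heP i))))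
    · obtain rfl | hij := eq_or_ne i j
      · exact .inl (mul_eq_left.1 (ha.eq_of_qle hP (heP i) (qle_refl _)))
      · exact hcompl i j a hij ha
  have hgen : ∀ i f ν, d f = e i → d ν ∈ insert 1 (Set.range e) →
      (MCE P d src rng mul f ν).Finite := by
    rintro i f ν hf (hν | ⟨j, hν⟩)
    · exact mce_comm (P := P) ν f ▸ hPS.finite_mce_of_eq_one hP hν f
    · obtain rfl | hij := eq_or_ne i j
      · exact hPS.finite_mce_of_qle hP (hf.trans hν ▸ qle_refl _)
      · exact hfin i j hij f ν hf hν.symm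
  have hright := hPS.finite_mce_of_generators hP he hT hgen
  refine fun μ ν => hPS.finite_mce_of_generators hP he (T := Set.univ) (fun _ _ _ _ _ => trivial)
    (fun i f ν hf _ => ?_) μ ν trivial
  rw [mce_comm]
  exact hright ν f (.inr ⟨i, hf.symm⟩)

end ProductSystem

section PositiveCone

variable {k : ℕ}

theorem mem_posCone {g : Multiplicative (Fin k → ℤ)} : g ∈ posCone k ↔ 0 ≤ g.toAdd := Iff.rfl

theorem qle_posCone {g h : Multiplicative (Fin k → ℤ)} :
    qle (posCone k) g h ↔ g.toAdd ≤ h.toAdd := by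
  rw [qle, mem_posCone, toAdd_mul, toAdd_inv, neg_add_eq_sub, sub_nonneg]

theorem isLUB2_posCone_sup {p : Multiplicative (Fin k → ℤ)} (hp : p ∈ posCone k)
    (q : Multiplicative (Fin k → ℤ)) :
    IsLUB2 (posCone k) p q (Multiplicative.ofAdd (p.toAdd ⊔ q.toAdd)) := by
  simp only [IsLUB2, IsUB, qle_posCone, mem_posCone, toAdd_ofAdd]
  exact ⟨⟨le_sup_of_le_left hp, le_sup_left, le_sup_right⟩, fun r hr => sup_le hr.2.1 hr.2.2⟩

theorem quasiLatticeOrdered_posCone (k : ℕ) : QuasiLatticeOrdered (posCone k) :=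
  ⟨fun _ hg hg' => Multiplicative.toAdd.injective (le_antisymm (neg_nonneg.1 hg') hg),
    fun _ hp q _ _ => ⟨_, isLUB2_posCone_sup hp q⟩⟩

theorem egen_mem_posCone (i : Fin k) : egen k i ∈ posCone k :=
  mem_posCone.2 (Pi.single_nonneg.2 zero_le_one)

theorem closure_range_egen (k : ℕ) : Submonoid.closure (Set.range (egen k)) = posCone k := by
  refine le_antisymm (Submonoid.closure_le.2 (Set.range_subset_iff.2 egen_mem_posCone))
    fun g hg => ?_
  have hprod : g = ∏ i, egen k i ^ (g.toAdd i).toNat := by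
    refine Multiplicative.toAdd.injective (funext fun j => ?_)
    simpa [egen, toAdd_prod, Finset.sum_apply, Pi.single_apply] using hg j
  rw [hprod]
  exact prod_mem fun i _ => pow_mem (Submonoid.subset_closure (Set.mem_range_self i)) _

theorem sup_toAdd_egen {i j : Fin k} (hij : i ≠ j) :
    (egen k i).toAdd ⊔ (egen k j).toAdd = (egen k i * egen k j).toAdd := by
  funext l
  obtain rfl | hl := eq_or_ne l i
  · simp [egen, hij]
  · have hj : 0 ≤ (egen k j).toAdd l := egen_mem_posCone j l
    simpa [egen, hl] using hj

theorem eq_egen_of_isLUB2 {i j : Fin k} {a : Multiplicative (Fin k → ℤ)} (hij : i ≠ j)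
    (ha : IsLUB2 (posCone k) (egen k i) (egen k j) (egen k i * a)) : a = egen k j := by
  have hlub := isLUB2_posCone_sup (egen_mem_posCone i) (egen k j)
  rw [sup_toAdd_egen hij, ofAdd_toAdd] at hlub
  exact mul_left_cancel (ha.unique (quasiLatticeOrdered_posCone k) hlub)

end PositiveCone

/-- Lemma 8.1: a product system of graphs over `ℕ^k` is finitely aligned iff `MCE(μ,ν)` is
finite for all pairs of edges `μ ∈ E¹_{e_i}`, `ν ∈ E¹_{e_j}` with `i ≠ j`. -/
theorem stmt1 {k : ℕ} {Λ : Type*}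
    (d : Λ → Multiplicative (Fin k → ℤ)) (src rng : Λ → Λ) (mul : Λ → Λ → Λ)
    (hPS : IsProductSystem (posCone k) d src rng mul) :
    FinitelyAligned (posCone k) d src rng mul ↔
      ∀ i j : Fin k, i ≠ j → ∀ μ ν : Λ, d μ = egen k i → d ν = egen k j →
        (MCE (posCone k) d src rng mul μ ν).Finite :=
  stmt1_general (quasiLatticeOrdered_posCone k) (closure_range_egen k)
    (fun _ _ _ hij ha => .inr ⟨_, (eq_egen_of_isLUB2 hij ha).symm⟩) hPS

end PSG
end
end

section
/- Let (G,P) be a quasi-lattice ordered group, (E,φ) a finitely aligned product system of graphs over P, and {t_λ : λ ∈ E¹} a Toeplitz–Cuntz–Krieger E-family in a C*-algebra B. Let F ⊆ E¹ be finite with s(λ) ∈ F for every λ ∈ F. Then ∑_{λ∈∨F} Q^{∨F}_λ = ∑_{v∈s(F)} t_v, and for every λ ∈ ∨F, t_λ t_λ* = ∑ Q^{∨F}_{λλ'}, the sum over those λ' ∈ E¹ with λλ' defined and λλ' ∈ ∨F. -/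
open scoped Classical

noncomputable section

namespace PSG

/-!
Order paths by "`x` is an initial segment of `y`". Fix `x ∈ ∨F` and let `X` be the set of extensions
of `x` in `∨F`; it is closed under minimal common extensions. Hence the range projections
`p_y = t_y t_y*` with `y ∈ X` satisfy `p_y p_z = ∑ p_w`, where `w ∈ X` runs over the minimal common
extensions of `y` and `z`; in particular they commute. Listing `X` along a linear extension of the
order, telescoping gives
`1 - ∏_{y ∈ X} (1 - p_y) = ∑_{y ∈ X} p_y ∏_{z after y} (1 - p_z)`.
In the summand of `y` only the factors with `z` a proper extension of `y` matter: for any other `z`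
after `y`, each minimal common extension `w` of `y` and `z` is a proper extension of `y`, so its
factor `1 - p_w` kills `p_w`, and hence the product kills `p_y p_z = ∑ p_w`. The summand is
therefore `Q^{∨F}_y`, while the left-hand side is `p_x`, because `p_x` is the largest of the
projections.
For the sum over all of `∨F`, apply this to each source vertex `x = s(λ)`, `λ ∈ F`.
-/

section NicaFamily

variable {R ι : Type*} [PartialOrder ι] {X : Finset ι} {x y : ι}

/-- A family of idempotents, decreasing on the finite partially ordered set `X`, that multiplies as
the range projections of a Toeplitz–Cuntz–Krieger family do: the set `M` plays the role of the set
of minimal common extensions of `x` and `y`. Reflexivity of `≤` in `mul_of_le` gives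
idempotency. -/
structure IsNicaFamily [NonUnitalNonAssocSemiring R] (X : Finset ι) (p : ι → R) : Prop where
  mul_of_le : ∀ x ∈ X, ∀ y ∈ X, x ≤ y → p x * p y = p y
  mul_eq_sum : ∀ x ∈ X, ∀ y ∈ X,
    ∃ M ⊆ X, (∀ w ∈ M, x ≤ w ∧ y ≤ w) ∧ p x * p y = ∑ w ∈ M, p w

namespace IsNicaFamily

section CommRing

variable [CommRing R] {p : ι → R}

lemma mul_prod_one_sub_eq_zero (hp : IsNicaFamily X p) {s : Finset ι} (hy : y ∈ X) (hys : y ∈ s) :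
    p y * ∏ z ∈ s, (1 - p z) = 0 := by
  rw [← Finset.mul_prod_erase s _ hys, ← mul_assoc, mul_sub, mul_one,
    hp.mul_of_le y hy y hy le_rfl, sub_self, zero_mul]

lemma mul_prod_one_sub_eq_mul_prod_gt (hp : IsNicaFamily X p) (hy : y ∈ X) {s : Finset ι}
    (hs : ∀ z ∈ s, z ∈ X ∧ ¬z ≤ y) (hgt : ∀ z ∈ X, y < z → z ∈ s) :
    p y * ∏ z ∈ s, (1 - p z) = p y * ∏ z ∈ X with y < z, (1 - p z) := by
  set c := p y * ∏ z ∈ X with y < z, (1 - p z) with hc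
  have hsub : {z ∈ X | y < z} ⊆ s := fun z hz =>
    hgt z (Finset.mem_filter.1 hz).1 (Finset.mem_filter.1 hz).2
  have hkill : ∀ z ∈ s, c * p z = 0 := by
    intro z hz
    obtain ⟨M, hMX, hM, hyz⟩ := hp.mul_eq_sum y hy z (hs z hz).1
    rw [hc, mul_right_comm, hyz, Finset.sum_mul]
    refine Finset.sum_eq_zero fun w hw => hp.mul_prod_one_sub_eq_zero (hMX hw) ?_
    refine Finset.mem_filter.2 ⟨hMX hw, (hM w hw).1.lt_of_ne ?_⟩
    rintro rfl
    exact (hs z hz).2 (hM y hw).2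
  rw [← Finset.prod_sdiff hsub, mul_left_comm, mul_comm]
  refine Finset.prod_induction _ (c * · = c) (fun a b ha hb => ?_) (mul_one c) fun z hz => ?_
  · rw [← mul_assoc, ha, hb]
  · rw [mul_sub, mul_one, hkill z (Finset.mem_sdiff.1 hz).1, sub_zero]

lemma prod_one_sub (hp : IsNicaFamily X p) :
    ∏ y ∈ X, (1 - p y) = 1 - ∑ y ∈ X, p y * ∏ z ∈ X with y < z, (1 - p z) := by
  refine (Finset.prod_one_sub_ordered (ι := (LinearExtension ι)ᵒᵈ) X p).trans ?_
  refine congrArg (1 - ·) <| Finset.sum_congr rfl fun y hy =>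
    hp.mul_prod_one_sub_eq_mul_prod_gt hy ?_ ?_
  · intro z hz
    obtain ⟨hzX, hyz⟩ := (Finset.mem_filter (α := (LinearExtension ι)ᵒᵈ)).1 hz
    exact ⟨hzX, fun hzy => hyz.not_ge (toLinearExtension.monotone hzy)⟩
  · intro z hz hyz
    exact (Finset.mem_filter (α := (LinearExtension ι)ᵒᵈ)).2
      ⟨hz, (toLinearExtension.monotone hyz.le).lt_of_ne hyz.ne⟩

lemma eq_sum_mul_prod_one_sub (hp : IsNicaFamily X p) (hx : x ∈ X) (hmin : ∀ y ∈ X, x ≤ y) :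
    p x = ∑ y ∈ X, p y * ∏ z ∈ X with y < z, (1 - p z) := by
  calc p x = p x * (1 - ∏ y ∈ X, (1 - p y)) := by
        rw [mul_sub, mul_one, hp.mul_prod_one_sub_eq_zero hx hx, sub_zero]
    _ = ∑ y ∈ X, p y * ∏ z ∈ X with y < z, (1 - p z) := by
        rw [hp.prod_one_sub, sub_sub_cancel, Finset.mul_sum]
        refine Finset.sum_congr rfl fun y hy => ?_
        rw [← mul_assoc, hp.mul_of_le x hx y hy (hmin y hy)]

end CommRing

open scoped IsMulCommutative in
lemma eq_sum_of_commute [Ring R] {p Q : ι → R} (hp : IsNicaFamily X p)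
    (hcomm : ∀ x ∈ X, ∀ y ∈ X, Commute (p x) (p y))
    (hQ : ∀ y ∈ X, ∃ L : List ι, L.Nodup ∧ (∀ z, z ∈ L ↔ z ∈ X ∧ y < z) ∧
      Q y = p y * (L.map fun z => 1 - p z).prod)
    (hx : x ∈ X) (hmin : ∀ y ∈ X, x ≤ y) : p x = ∑ y ∈ X, Q y := by
  let S := Subring.closure (p '' X)
  have : IsMulCommutative S := Subring.isMulCommutative_closure <| by
    rintro _ ⟨x, hx, rfl⟩ _ ⟨y, hy, rfl⟩
    exact hcomm x hx y hy
  choose! q hq using fun y (hy : y ∈ X) =>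
    (⟨⟨p y, Subring.subset_closure ⟨y, hy, rfl⟩⟩, rfl⟩ : ∃ a : S, (a : R) = p y)
  have hqNica : IsNicaFamily X q := by
    refine ⟨fun x hx y hy hxy => ?_, fun x hx y hy => ?_⟩
    · apply Subtype.ext
      rw [Subring.coe_mul, hq x hx, hq y hy, hp.mul_of_le x hx y hy hxy]
    · obtain ⟨M, hMX, hM, hxy⟩ := hp.mul_eq_sum x hx y hy
      refine ⟨M, hMX, hM, Subtype.ext ?_⟩
      rw [Subring.coe_mul, hq x hx, hq y hy, hxy, AddSubmonoidClass.coe_finsetSum]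
      exact Finset.sum_congr rfl fun w hw => (hq w (hMX hw)).symm
  have hqx := hqNica.eq_sum_mul_prod_one_sub (R := S) hx hmin
  rw [← hq x hx, hqx, AddSubmonoidClass.coe_finsetSum]
  refine Finset.sum_congr rfl fun y hy => ?_
  obtain ⟨L, hnodup, hL, hQy⟩ := hQ y hy
  have hLX : {z ∈ X | y < z} = L.toFinset := by
    ext z
    rw [Finset.mem_filter, List.mem_toFinset, hL]
  rw [hLX, List.prod_toFinset _ hnodup, Subring.coe_mul, hq y hy, SubmonoidClass.coe_list_prod,
    List.map_map, hQy]
  congr 2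
  refine List.map_congr_left fun z hz => ?_
  rw [Function.comp_apply, AddSubgroupClass.coe_sub, OneMemClass.coe_one, hq z ((hL z).1 hz).1]

end IsNicaFamily

end NicaFamily

section ProductSystem

variable {G : Type*} [Group G] {Λ : Type*} {P : Submonoid G} {d : Λ → G} {src rng : Λ → Λ}
  {mul : Λ → Λ → Λ} {F : Finset Λ}

lemma qle_trans {a b c : G} (hab : qle P a b) (hbc : qle P b c) : qle P a c := by
  simpa only [qle, mul_assoc, mul_inv_cancel_left] using P.mul_mem hab hbc

lemma IsLUBFam.union {D D' : Set G} {p q r : G} (hp : IsLUBFam P D p) (hq : IsLUBFam P D' q)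
    (hr : IsLUB2 P p q r) : IsLUBFam P (D ∪ D') r := by
  obtain ⟨⟨hrP, hpr, hqr⟩, hleast⟩ := hr
  refine ⟨hrP, ?_, fun r' hr' hub => hleast r' ⟨hr', hp.2.2 r' hr' fun g hg => hub g (.inl hg),
    hq.2.2 r' hr' fun g hg => hub g (.inr hg)⟩⟩
  rintro g (hg | hg)
  · exact qle_trans (hp.2.1 g hg) hpr
  · exact qle_trans (hq.2.1 g hg) hqr

lemma isLUBFam_singleton {p : G} (hp : p ∈ P) : IsLUBFam P {p} p := by
  refine ⟨hp, ?_, fun r _ hr => hr p rfl⟩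
  rintro _ rfl
  rw [qle, inv_mul_cancel]
  exact P.one_mem

lemma image_mul_eq_extensions (a : Λ) (V : Set Λ) :
    mul a '' {b | rng a = src b ∧ mul a b ∈ V} = {c | c ∈ V ∧ IsInit src rng mul a c} := by
  ext c
  constructor
  · rintro ⟨b, ⟨hab, hV⟩, rfl⟩
    exact ⟨hV, b, hab, rfl⟩
  · rintro ⟨hV, b, hab, rfl⟩
    exact ⟨b, ⟨hab, hV⟩, rfl⟩

namespace IsProductSystem

lemma isInit_refl (h : IsProductSystem P d src rng mul) (a : Λ) : IsInit src rng mul a a :=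
  ⟨rng a, (h.src_vertex _ (h.d_rng a)).symm, h.mul_rng_self a⟩

lemma isInit_trans (h : IsProductSystem P d src rng mul) {a b c : Λ}
    (hab : IsInit src rng mul a b) (hbc : IsInit src rng mul b c) : IsInit src rng mul a c := by
  obtain ⟨x, hx, rfl⟩ := hab
  obtain ⟨y, hy, rfl⟩ := hbc
  rw [h.rng_mul a x hx] at hy
  exact ⟨mul x y, by rw [h.src_mul x y hy, hx], (h.mul_assoc' a x y hx hy).symm⟩

lemma mul_eq_self_iff (h : IsProductSystem P d src rng mul) {a b : Λ} (hab : rng a = src b) :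
    mul a b = a ↔ d b = 1 := by
  refine ⟨fun heq => ?_, fun hb => ?_⟩
  · have hd := h.d_mul a b hab
    rw [heq] at hd
    exact mul_eq_left.1 hd.symm
  · rw [← h.src_vertex b hb, ← hab, h.mul_rng_self]

lemma isInit_antisymm (h : IsProductSystem P d src rng mul) (hP : ∀ g ∈ P, g⁻¹ ∈ P → g = 1)
    {a b : Λ} (hab : IsInit src rng mul a b) (hba : IsInit src rng mul b a) : a = b := by
  obtain ⟨x, hx, rfl⟩ := hab
  obtain ⟨y, hy, hya⟩ := hba
  have hd := h.d_mul _ _ hy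
  rw [hya, h.d_mul a x hx, mul_assoc] at hd
  have hxy : d x * d y = 1 := mul_eq_left.1 hd.symm
  refine ((h.mul_eq_self_iff hx).2 (hP _ (h.d_mem x) ?_)).symm
  rw [inv_eq_of_mul_eq_one_right hxy]
  exact h.d_mem y

/-- The order on the paths of a product system in which `a ≤ b` means that `a` is an initial
segment of `b`. -/
abbrev prefixOrder (h : IsProductSystem P d src rng mul) (hP : ∀ g ∈ P, g⁻¹ ∈ P → g = 1) :
    PartialOrder Λ where
  le := IsInit src rng mul
  le_refl := h.isInit_refl
  le_trans _ _ _ := h.isInit_trans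
  le_antisymm _ _ := h.isInit_antisymm hP

lemma isInit_iff_src_eq (h : IsProductSystem P d src rng mul) {v a : Λ} (hv : d v = 1) :
    IsInit src rng mul v a ↔ src a = v := by
  constructor
  · rintro ⟨x, hx, rfl⟩
    rw [h.src_mul v x hx, h.src_vertex v hv]
  · rintro rfl
    exact ⟨a, h.rng_vertex _ hv, h.src_mul_self a⟩

lemma isInit_src (h : IsProductSystem P d src rng mul) (a : Λ) : IsInit src rng mul (src a) a :=
  (h.isInit_iff_src_eq (h.d_src a)).2 rfl

lemma src_eq_of_isInit (h : IsProductSystem P d src rng mul) {a b : Λ}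
    (hab : IsInit src rng mul a b) : src b = src a :=
  (h.isInit_iff_src_eq (h.d_src a)).1 (h.isInit_trans (h.isInit_src a) hab)

lemma mul_injOn (h : IsProductSystem P d src rng mul) (a : Λ) :
    Set.InjOn (mul a) {b | rng a = src b} := by
  intro b hb c hc heq
  have hd : d c = d b := by
    have hdeg := h.d_mul a c hc
    rw [← heq, h.d_mul a b hb] at hdeg
    exact (mul_left_cancel hdeg).symm
  exact congrArg Prod.snd <|
    (h.factor (d a) (d b) (h.d_mem a) (h.d_mem b) _ (h.d_mul a b hb)).unique
      (y₁ := (a, b)) (y₂ := (a, c)) ⟨rfl, rfl, hb, rfl⟩ ⟨rfl, hd, hc, heq.symm⟩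

lemma image_mul_eq_proper_extensions (h : IsProductSystem P d src rng mul) (a : Λ) (V : Set Λ) :
    mul a '' {b | d b ≠ 1 ∧ rng a = src b ∧ mul a b ∈ V} =
      {c | c ∈ V ∧ IsInit src rng mul a c ∧ c ≠ a} := by
  ext c
  constructor
  · rintro ⟨b, ⟨hb, hab, hV⟩, rfl⟩
    exact ⟨hV, ⟨b, hab, rfl⟩, mt (h.mul_eq_self_iff hab).1 hb⟩
  · rintro ⟨hV, ⟨b, hab, rfl⟩, hne⟩
    exact ⟨b, ⟨mt (h.mul_eq_self_iff hab).2 hne, hab, hV⟩, rfl⟩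

lemma mem_vee_of_mem (h : IsProductSystem P d src rng mul) {a : Λ} (ha : a ∈ F) :
    a ∈ vee P d src rng mul F := by
  refine ⟨{a}, Finset.singleton_nonempty a, Finset.singleton_subset_iff.2 ha, ?_, ?_⟩
  · simpa only [Finset.coe_singleton, Set.mem_singleton_iff, forall_eq] using h.isInit_refl a
  · rw [Finset.coe_singleton, Set.image_singleton]
    exact isLUBFam_singleton (h.d_mem a)

lemma mem_vee_of_mem_MCE (h : IsProductSystem P d src rng mul) {x y w : Λ}
    (hx : x ∈ vee P d src rng mul F) (hy : y ∈ vee P d src rng mul F)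
    (hw : w ∈ MCE P d src rng mul x y) : w ∈ vee P d src rng mul F := by
  obtain ⟨S, hS, hSF, hxS, hxlub⟩ := hx
  obtain ⟨S', -, hSF', hyS, hylub⟩ := hy
  obtain ⟨hxw, hyw, hlub⟩ := hw
  refine ⟨S ∪ S', hS.mono Finset.subset_union_left, Finset.union_subset hSF hSF', ?_, ?_⟩
  · intro a ha
    rcases Finset.mem_union.1 (Finset.mem_coe.1 ha) with ha | ha
    · exact h.isInit_trans (hxS a ha) hxw
    · exact h.isInit_trans (hyS a ha) hyw
  · rw [Finset.coe_union, Set.image_union]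
    exact hxlub.union hylub hlub

lemma src_mem_image_of_mem_vee (h : IsProductSystem P d src rng mul) {x : Λ}
    (hx : x ∈ vee P d src rng mul F) : src x ∈ F.image src := by
  obtain ⟨S, ⟨a, ha⟩, hSF, hxS, -⟩ := hx
  exact Finset.mem_image.2 ⟨a, hSF ha, (h.src_eq_of_isInit (hxS a ha)).symm⟩

end IsProductSystem

lemma tail_spec {a c : Λ} (h : IsInit src rng mul a c) :
    rng a = src (tail src rng mul a c) ∧ mul a (tail src rng mul a c) = c := by
  rw [tail, dif_pos h]
  exact h.choose_spec

/-- The range projection `t_a t_a*` of `t_a`. -/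
def rangeProj {B : Type*} [Mul B] [Star B] (t : Λ → B) (a : Λ) : B := t a * star (t a)

lemma star_rangeProj {B : Type*} [Mul B] [StarMul B] (t : Λ → B) (a : Λ) :
    star (rangeProj t a) = rangeProj t a := by
  rw [rangeProj, star_mul, star_star]

variable {B : Type*} [CStarAlgebra B] [PartialOrder B] {t : Λ → B}

namespace IsToeplitzFamily

lemma rangeProj_mul_self (ht : IsToeplitzFamily P d src rng mul t)
    (hPS : IsProductSystem P d src rng mul) (a : Λ) : rangeProj t a * t a = t a := by
  rw [rangeProj, mul_assoc, ht.star_mul_self,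
    ht.mul_eq a _ (hPS.src_vertex _ (hPS.d_rng a)).symm, hPS.mul_rng_self]

lemma rangeProj_mul_eq_right (ht : IsToeplitzFamily P d src rng mul t)
    (hPS : IsProductSystem P d src rng mul) {a b : Λ} (hab : IsInit src rng mul a b) :
    rangeProj t a * rangeProj t b = rangeProj t b := by
  obtain ⟨x, hx, rfl⟩ := hab
  have hfix : rangeProj t a * t (mul a x) = t (mul a x) := by
    rw [← ht.mul_eq a x hx, ← mul_assoc, ht.rangeProj_mul_self hPS]
  rw [rangeProj.eq_def t (mul a x), ← mul_assoc, hfix]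

lemma rangeProj_mul_eq_left (ht : IsToeplitzFamily P d src rng mul t)
    (hPS : IsProductSystem P d src rng mul) {a b : Λ} (hab : IsInit src rng mul a b) :
    rangeProj t b * rangeProj t a = rangeProj t b := by
  simpa only [star_mul, star_rangeProj] using congrArg star (ht.rangeProj_mul_eq_right hPS hab)

lemma rangeProj_vertex (ht : IsToeplitzFamily P d src rng mul t) {v : Λ} (hv : d v = 1) :
    rangeProj t v = t v := by
  rw [rangeProj, (ht.vertex_sa v hv).star_eq, ht.vertex_idem v hv]

lemma rangeProj_mul_prod_sub (ht : IsToeplitzFamily P d src rng mul t)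
    (hPS : IsProductSystem P d src rng mul) {l : Λ} (L : List Λ)
    (hL : ∀ z ∈ L, IsInit src rng mul l z) :
    rangeProj t l * (L.map fun z => t (src l) - rangeProj t z).prod =
      rangeProj t l * (L.map fun z => 1 - rangeProj t z).prod := by
  induction L with
  | nil => rfl
  | cons z L ih =>
    have hlz := hL z List.mem_cons_self
    have hunit : rangeProj t l * (t (src l) - rangeProj t z) =
        rangeProj t l * (1 - rangeProj t z) := by
      rw [mul_sub, mul_sub, ← ht.rangeProj_vertex (hPS.d_src l),
        ht.rangeProj_mul_eq_left hPS (hPS.isInit_src l), mul_one]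
    have hcomm : Commute (rangeProj t l) (1 - rangeProj t z) := (Commute.one_right _).sub_right <|
      (ht.rangeProj_mul_eq_right hPS hlz).trans (ht.rangeProj_mul_eq_left hPS hlz).symm
    rw [List.map_cons, List.prod_cons, List.map_cons, List.prod_cons, ← mul_assoc, hunit, hcomm.eq,
      mul_assoc, ih fun y hy => hL y (List.mem_cons_of_mem z hy), ← mul_assoc, ← mul_assoc,
      hcomm.eq]

lemma exists_list_Qproj_eq (ht : IsToeplitzFamily P d src rng mul t)
    (hPS : IsProductSystem P d src rng mul) {l : Λ}
    (hfin : {z | z ∈ vee P d src rng mul F ∧ IsInit src rng mul l z ∧ z ≠ l}.Finite) :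
    ∃ L : List Λ, L.Nodup ∧
      (∀ z, z ∈ L ↔ z ∈ vee P d src rng mul F ∧ IsInit src rng mul l z ∧ z ≠ l) ∧
      Qproj P d src rng mul t F l =
        rangeProj t l * (L.map fun z => 1 - rangeProj t z).prod := by
  have himage := hPS.image_mul_eq_proper_extensions l (vee P d src rng mul F)
  have hinj := (hPS.mul_injOn l).mono fun b
    (hb : b ∈ {b | d b ≠ 1 ∧ rng l = src b ∧ mul l b ∈ vee P d src rng mul F}) => hb.2.1
  have htails := Set.Finite.of_finite_image (himage ▸ hfin) hinj
  have hmem : ∀ z, z ∈ htails.toFinset.toList.map (mul l) ↔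
      z ∈ vee P d src rng mul F ∧ IsInit src rng mul l z ∧ z ≠ l := fun z => by
    simp only [List.mem_map, Finset.mem_toList, htails.mem_toFinset]
    exact Set.ext_iff.1 himage z
  refine ⟨_, htails.toFinset.nodup_toList.map_on fun a ha b hb => ?_, hmem, ?_⟩
  · rw [Finset.mem_toList, htails.mem_toFinset] at ha hb
    exact fun heq => hinj ha hb heq
  · rw [← ht.rangeProj_mul_prod_sub hPS _ fun z hz => ((hmem z).1 hz).2.1, List.map_map]
    exact dif_pos htails

end IsToeplitzFamily

namespace IsTCKFamily

lemma rangeProj_mul_rangeProj (ht : IsTCKFamily P d src rng mul t) {x y : Λ} {M : Finset Λ}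
    (hM : ↑M = MCE P d src rng mul x y) :
    rangeProj t x * rangeProj t y = ∑ w ∈ M, rangeProj t w := by
  have hrel : rangeProj t x * rangeProj t y = t x * (star (t x) * t y) * star (t y) := by
    simp only [rangeProj, mul_assoc]
  rw [hrel, ht.2 x y M hM, Finset.mul_sum, Finset.sum_mul]
  refine Finset.sum_congr rfl fun w hw => ?_
  have hwM : w ∈ MCE P d src rng mul x y := hM ▸ hw
  obtain ⟨hx, hxw⟩ := tail_spec hwM.1
  obtain ⟨hy, hyw⟩ := tail_spec hwM.2.1
  rw [← mul_assoc, ht.1.mul_eq _ _ hx, hxw, mul_assoc, ← star_mul, ht.1.mul_eq _ _ hy, hyw,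
    rangeProj]

lemma commute_rangeProj (ht : IsTCKFamily P d src rng mul t) {x y : Λ}
    (hfin : (MCE P d src rng mul x y).Finite) : Commute (rangeProj t x) (rangeProj t y) := by
  have hxy := ht.rangeProj_mul_rangeProj hfin.coe_toFinset
  have hyx := congrArg star hxy
  simp only [star_mul, star_rangeProj, star_sum] at hyx
  exact hxy.trans hyx.symm

theorem rangeProj_eq_sum_Qproj (ht : IsTCKFamily P d src rng mul t)
    (hPS : IsProductSystem P d src rng mul) (hP : ∀ g ∈ P, g⁻¹ ∈ P → g = 1) {X : Finset Λ} {x : Λ}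
    (hx : x ∈ vee P d src rng mul F)
    (hX : ↑X = {y | y ∈ vee P d src rng mul F ∧ IsInit src rng mul x y}) :
    rangeProj t x = ∑ y ∈ X, Qproj P d src rng mul t F y := by
  let := hPS.prefixOrder hP
  have hmem : ∀ y, y ∈ X ↔ y ∈ vee P d src rng mul F ∧ x ≤ y := Set.ext_iff.1 hX
  have hMCE : ∀ y ∈ X, ∀ z ∈ X, MCE P d src rng mul y z ⊆ X := fun y hy z hz w hw =>
    (hmem w).2 ⟨hPS.mem_vee_of_mem_MCE ((hmem y).1 hy).1 ((hmem z).1 hz).1 hw,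
      ((hmem y).1 hy).2.trans hw.1⟩
  have hfin : ∀ y ∈ X, ∀ z ∈ X, (MCE P d src rng mul y z).Finite := fun y hy z hz =>
    X.finite_toSet.subset (hMCE y hy z hz)
  have hNica : IsNicaFamily X (rangeProj t) := by
    refine ⟨fun y _ z _ hyz => ht.1.rangeProj_mul_eq_right hPS hyz, fun y hy z hz => ?_⟩
    refine ⟨(hfin y hy z hz).toFinset, fun w hw => ?_, fun w hw => ?_,
      ht.rangeProj_mul_rangeProj (hfin y hy z hz).coe_toFinset⟩
    · exact hMCE y hy z hz ((hfin y hy z hz).mem_toFinset.1 hw)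
    · have hwyz := (hfin y hy z hz).mem_toFinset.1 hw
      exact ⟨hwyz.1, hwyz.2.1⟩
  refine hNica.eq_sum_of_commute (fun y hy z hz => ht.commute_rangeProj (hfin y hy z hz))
    (fun y hy => ?_) ((hmem x).2 ⟨hx, le_rfl⟩) fun y hy => ((hmem y).1 hy).2
  have hgt : ∀ z, z ∈ X ∧ y < z ↔
      z ∈ vee P d src rng mul F ∧ IsInit src rng mul y z ∧ z ≠ y := fun z => by
    rw [hmem, lt_iff_le_and_ne, ne_comm]
    exact ⟨fun h => ⟨h.1.1, h.2⟩, fun h => ⟨⟨h.1, ((hmem y).1 hy).2.trans h.2.1⟩, h.2⟩⟩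
  simp only [hgt]
  exact ht.1.exists_list_Qproj_eq hPS <| X.finite_toSet.subset fun z hz => ((hgt z).2 hz).1

theorem sum_Qproj_vee (ht : IsTCKFamily P d src rng mul t)
    (hPS : IsProductSystem P d src rng mul) (hP : ∀ g ∈ P, g⁻¹ ∈ P → g = 1)
    (hsrc : ∀ a ∈ F, src a ∈ F) {M : Finset Λ} (hM : ↑M = vee P d src rng mul F) :
    ∑ l ∈ M, Qproj P d src rng mul t F l = ∑ v ∈ F.image src, t v := by
  have hmem : ∀ y, y ∈ M ↔ y ∈ vee P d src rng mul F := Set.ext_iff.1 hM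
  rw [← Finset.sum_fiberwise_of_maps_to fun y hy =>
    hPS.src_mem_image_of_mem_vee ((hmem y).1 hy)]
  refine Finset.sum_congr rfl fun v hv => ?_
  obtain ⟨a, ha, rfl⟩ := Finset.mem_image.1 hv
  rw [← ht.1.rangeProj_vertex (hPS.d_src a)]
  refine (ht.rangeProj_eq_sum_Qproj hPS hP (hPS.mem_vee_of_mem (hsrc a ha)) ?_).symm
  ext y
  rw [Finset.mem_coe, Finset.mem_filter, hmem, Set.mem_ofPred_eq,
    hPS.isInit_iff_src_eq (hPS.d_src a)]

theorem rangeProj_eq_sum_Qproj_mul (ht : IsTCKFamily P d src rng mul t)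
    (hPS : IsProductSystem P d src rng mul) (hP : ∀ g ∈ P, g⁻¹ ∈ P → g = 1) {l : Λ}
    (hl : l ∈ vee P d src rng mul F) {T : Finset Λ}
    (hT : ↑T = {b : Λ | rng l = src b ∧ mul l b ∈ vee P d src rng mul F}) :
    rangeProj t l = ∑ b ∈ T, Qproj P d src rng mul t F (mul l b) := by
  have hinj : Set.InjOn (mul l) T := (hPS.mul_injOn l).mono <| hT ▸ fun b hb => hb.1
  rw [← Finset.sum_image hinj]
  refine ht.rangeProj_eq_sum_Qproj hPS hP hl ?_
  rw [Finset.coe_image, hT, image_mul_eq_extensions]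

end IsTCKFamily

end ProductSystem

theorem stmt6_general {G : Type*} [Group G] {Λ : Type*} (P : Submonoid G)
    (hP : ∀ g ∈ P, g⁻¹ ∈ P → g = 1)
    (d : Λ → G) (src rng : Λ → Λ) (mul : Λ → Λ → Λ)
    (hPS : IsProductSystem P d src rng mul)
    {B : Type*} [CStarAlgebra B] [PartialOrder B]
    (t : Λ → B) (ht : IsTCKFamily P d src rng mul t)
    (F : Finset Λ) (hsrc : ∀ a ∈ F, src a ∈ F) :
    (∀ M : Finset Λ, ↑M = vee P d src rng mul F →
      ∑ l ∈ M, Qproj P d src rng mul t F l = ∑ v ∈ F.image src, t v) ∧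
    (∀ l ∈ vee P d src rng mul F, ∀ T : Finset Λ,
      (↑T = {b : Λ | rng l = src b ∧ mul l b ∈ vee P d src rng mul F}) →
      t l * star (t l) = ∑ b ∈ T, Qproj P d src rng mul t F (mul l b)) :=
  ⟨fun _ hM => ht.sum_Qproj_vee hPS hP hsrc hM,
    fun _ hl _ hT => ht.rangeProj_eq_sum_Qproj_mul hPS hP hl hT⟩

/-- Equation (7.2) and its refinement: `∑_{λ∈∨F} Q^{∨F}_λ = ∑_{v∈s(F)} t_v`, and for every
`λ ∈ ∨F`, `t_λ t_λ* = ∑_{λλ'∈∨F} Q^{∨F}_{λλ'}`. -/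
theorem stmt6 {G : Type*} [Group G] {Λ : Type*} (P : Submonoid G)
    (hQLO : QuasiLatticeOrdered P)
    (d : Λ → G) (src rng : Λ → Λ) (mul : Λ → Λ → Λ)
    (hPS : IsProductSystem P d src rng mul)
    (hFA : FinitelyAligned P d src rng mul)
    {B : Type*} [CStarAlgebra B] [PartialOrder B] [StarOrderedRing B]
    (t : Λ → B) (ht : IsTCKFamily P d src rng mul t)
    (F : Finset Λ) (hsrc : ∀ a ∈ F, src a ∈ F) :
    (∀ M : Finset Λ, ↑M = vee P d src rng mul F →
      ∑ l ∈ M, Qproj P d src rng mul t F l = ∑ v ∈ F.image src, t v) ∧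
    (∀ l ∈ vee P d src rng mul F, ∀ T : Finset Λ,
      (↑T = {b : Λ | rng l = src b ∧ mul l b ∈ vee P d src rng mul F}) →
      t l * star (t l) = ∑ b ∈ T, Qproj P d src rng mul t F (mul l b)) := by
  exact stmt6_general P hQLO.1 d src rng mul hPS t ht F hsrc

end PSG
end
end
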